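/- arXiv:2411.01293 — 2 statements merged into one kernel-verified Lean document; each statement's English description precedes it below -/
import Mathlib

section
/- Let D be a positive natural number, α, σ : ℝ → ℝ smooth with α(t) > 0 and σ(t) > 0 for all t, λ(t) = log(α(t)²/σ(t)²), f(t) = (d/dt) log α(t), g(t)² = -λ'(t)·σ(t)². Let p : ℝ → ℝ^D → ℝ be smooth and everywhere positive, satisfying the linear-drift Fokker–Planck equation ∂_t p(t,x) = -div_x(f(t)·x·p(t,x)) + (1/2)·g(t)²·Δ_x p(t,x) for all t and x. If x : ℝ → ℝ^D is a differentiable curve satisfying the probability-flow ODE x'(t) = f(t)·x(t) - (1/2)·g(t)²·∇_x log p(t, x(t)) for all t, then for all t: (d/dt) log p(t, x(t)) = -D·f(t) + (1/2)·g(t)²·Δ_x log p(t, x(t)). -/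
open scoped BigOperators RealInnerProductSpace
open MeasureTheory

/-- Divergence of a vector field on `EuclideanSpace ℝ (Fin D)`. -/
noncomputable def divg {D : ℕ} (F : EuclideanSpace ℝ (Fin D) → EuclideanSpace ℝ (Fin D))
    (x : EuclideanSpace ℝ (Fin D)) : ℝ :=
  ∑ i, fderiv ℝ F x (EuclideanSpace.single i 1) i

/-- Laplacian of a scalar field on `EuclideanSpace ℝ (Fin D)`. -/
noncomputable def lap {D : ℕ} (f : EuclideanSpace ℝ (Fin D) → ℝ)
    (x : EuclideanSpace ℝ (Fin D)) : ℝ :=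
  divg (gradient f) x

lemma divg_smul_aux {D : ℕ} (φ : EuclideanSpace ℝ (Fin D) → ℝ)
    (V : EuclideanSpace ℝ (Fin D) → EuclideanSpace ℝ (Fin D)) (x : EuclideanSpace ℝ (Fin D))
    (hφ : DifferentiableAt ℝ φ x) (hV : DifferentiableAt ℝ V x) :
    divg (fun y => φ y • V y) x = φ x * divg V x + fderiv ℝ φ x (V x) := by
  have h1 : fderiv ℝ φ x (V x) = ∑ i, V x i * fderiv ℝ φ x (EuclideanSpace.single i 1) := by
    conv_lhs => rw [← (EuclideanSpace.basisFun (Fin D) ℝ).sum_repr (V x)]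
    simp [map_sum]
  unfold divg
  rw [fderiv_fun_smul hφ hV, h1, Finset.mul_sum, ← Finset.sum_add_distrib]
  refine Finset.sum_congr rfl fun i _ => ?_
  simp
  ring

lemma divg_lin_aux {D : ℕ} (c : ℝ) (x : EuclideanSpace ℝ (Fin D)) :
    divg (fun y => c • y) x = D * c := by
  unfold divg
  have : fderiv ℝ (fun y : EuclideanSpace ℝ (Fin D) => c • y) x
      = c • ContinuousLinearMap.id ℝ _ := by
    exact ((hasFDerivAt_id x).const_smul c).fderiv
  rw [this]
  simp

lemma grad_log_aux {D : ℕ} (q : EuclideanSpace ℝ (Fin D) → ℝ) (hq : Differentiable ℝ q)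
    (hpos : ∀ y, 0 < q y) :
    gradient (fun y => Real.log (q y)) = fun y => (q y)⁻¹ • gradient q y := by
  funext y
  unfold gradient
  rw [fderiv.log (hq y) (hpos y).ne', map_smul]

/-- Density evolution along the probability-flow ODE for a linear-drift
diffusion with noise schedule `(α, σ)`. -/
theorem pf_ode_log_density_evolution {D : ℕ} (hD : 0 < D)
    (α σ : ℝ → ℝ) (hα : ContDiff ℝ (⊤ : ℕ∞) α) (hσ : ContDiff ℝ (⊤ : ℕ∞) σ)
    (hαpos : ∀ t, 0 < α t) (hσpos : ∀ t, 0 < σ t)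
    (lam f gsq : ℝ → ℝ)
    (hlam : ∀ t, lam t = Real.log (α t ^ 2 / σ t ^ 2))
    (hf : ∀ t, f t = deriv (fun u => Real.log (α u)) t)
    (hgsq : ∀ t, gsq t = -(deriv lam t) * σ t ^ 2)
    (p : ℝ → EuclideanSpace ℝ (Fin D) → ℝ)
    (hp : ContDiff ℝ (⊤ : ℕ∞) (fun q : ℝ × EuclideanSpace ℝ (Fin D) => p q.1 q.2))
    (hppos : ∀ t x, 0 < p t x)
    (hFP : ∀ t x, deriv (fun τ => p τ x) t
      = - divg (fun y => p t y • (f t • y)) x + (1 / 2) * gsq t * lap (p t) x)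
    (x : ℝ → EuclideanSpace ℝ (Fin D))
    (hx : ∀ t, HasDerivAt x
      (f t • x t - ((1 / 2) * gsq t) • gradient (fun y => Real.log (p t y)) (x t)) t) :
    ∀ t, deriv (fun τ => Real.log (p τ (x τ))) t
      = -(D : ℝ) * f t + (1 / 2) * gsq t * lap (fun y => Real.log (p t y)) (x t) := by
  intro t
  have hdp : Differentiable ℝ (fun q : ℝ × EuclideanSpace ℝ (Fin D) => p q.1 q.2) :=
    hp.differentiable (by simp)
  have hpt : ContDiff ℝ (⊤ : ℕ∞) (p t) :=
    hp.comp (contDiff_const.prodMk contDiff_id : ContDiff ℝ (⊤ : ℕ∞)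
      (fun y : EuclideanSpace ℝ (Fin D) => (t, y)))
  have hdpt : Differentiable ℝ (p t) := hpt.differentiable (by simp)
  have hgrad : Differentiable ℝ (gradient (p t)) := by
    have h1 : Differentiable ℝ (fderiv ℝ (p t)) :=
      (hpt.fderiv_right (m := 1) (by norm_cast)).differentiable (by simp)
    exact (InnerProductSpace.toDual ℝ (EuclideanSpace ℝ (Fin D))).symm.toContinuousLinearEquiv.differentiable.comp h1
  have hne : p t (x t) ≠ 0 := (hppos t (x t)).ne'
  have hlog := grad_log_aux (p t) hdpt (hppos t)
  have hlap : lap (fun y => Real.log (p t y)) (x t)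
      = (p t (x t))⁻¹ * lap (p t) (x t)
        - (p t (x t))⁻¹ ^ 2 * fderiv ℝ (p t) (x t) (gradient (p t) (x t)) := by
    unfold lap
    rw [hlog, divg_smul_aux (fun y => (p t y)⁻¹) _ _ ((hdpt _).inv hne) (hgrad _)]
    have := ((hasDerivAt_inv hne).comp_hasFDerivAt (x t) (hdpt (x t)).hasFDerivAt).fderiv
    change fderiv ℝ (fun y => (p t y)⁻¹) (x t) = _ at this
    rw [this]
    simp
    ring
  have hfp := hFP t (x t)
  rw [divg_smul_aux _ _ _ (hdpt _) (by fun_prop), divg_lin_aux] at hfp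
  have hF := (hdp (t, x t)).hasFDerivAt
  set L := fderiv ℝ (fun q : ℝ × EuclideanSpace ℝ (Fin D) => p q.1 q.2) (t, x t) with hL
  have ht : deriv (fun τ => p τ (x t)) t = L (1, 0) :=
    (HasFDerivAt.comp_hasDerivAt (f := fun τ : ℝ => (τ, x t)) t hF
      ((hasDerivAt_id t).prodMk (hasDerivAt_const t (x t)))).deriv
  have hs : ∀ v, fderiv ℝ (p t) (x t) v = L (0, v) := by
    intro v
    have := (HasFDerivAt.comp (f := fun y : EuclideanSpace ℝ (Fin D) => (t, y)) (x t) hF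
      ((hasFDerivAt_const t (x t)).prodMk (hasFDerivAt_id (x t)))).fderiv
    have h2 : fderiv ℝ (p t) (x t) = _ := this
    rw [h2]
    simp
  have hmain := (HasFDerivAt.comp_hasDerivAt (f := fun τ : ℝ => (τ, x τ)) t hF
      ((hasDerivAt_id t).prodMk (hx t)))
  have hmain2 := (HasDerivAt.log hmain hne).deriv
  have hsplit : ∀ v, L (1, v) = L (1, 0) + L (0, v) := by
    intro v
    rw [← map_add]; simp
  refine Eq.trans hmain2 ?_
  rw [hlap, hsplit, ← ht, hfp, ← hs, hlog]
  simp only [map_sub, map_smul, smul_eq_mul, Function.comp]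
  field_simp
  ring
end

section
/- (Mode-tracking ODE, Theorem 4.) Let D be a positive natural number, α, σ : ℝ → ℝ smooth with α(t) > 0 and σ(t) > 0 for all t, λ(t) = log(α(t)²/σ(t)²), f(t) = (d/dt) log α(t), g(t)² = -λ'(t)·σ(t)². Let p : ℝ → ℝ^D → ℝ be smooth and everywhere positive, satisfying the linear-drift Fokker–Planck equation ∂_t p(t,x) = -div_x(f(t)·x·p(t,x)) + (1/2)·g(t)²·Δ_x p(t,x) for all t and x. Fix t > 0 and x_t ∈ ℝ^D, and for s ∈ (0, t) set f̃(s) = α(t)/α(s), g̃²(s) = σ(t)² - f̃(s)²·σ(s)², ψ(s) = f̃(s)²/g̃²(s); assume g̃²(s) > 0 for all s ∈ (0, t). Let y : (0, t) → ℝ^D be a differentiable curve such that for every s ∈ (0, t), ∇_x log p(s, y(s)) + (f̃(s)/g̃²(s))·(x_t - f̃(s)·y(s)) = 0, and assume the linear map A(s, y(s)) = Hess_x log p(s, y(s)) - ψ(s)·Id is invertible for every s ∈ (0, t). Then y satisfies the mode-tracking ODE: y'(s) = f(s)·y(s) - g(s)²·∇_x log p(s, y(s)) - (1/2)·g(s)²·A(s,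 y(s))⁻¹ applied to ∇_x(Δ_x log p)(s, y(s)), for all s ∈ (0, t). Moreover ψ(s) = (1/σ(s)²)·e^{λ(t)}/(e^{λ(s)} - e^{λ(t)}). -/
open scoped BigOperators RealInnerProductSpace
open MeasureTheory

/-- The Hessian of `x ↦ log p(s, x)` at `x`, viewed as a continuous linear map. -/
noncomputable def hessLog {D : ℕ} (p : ℝ → EuclideanSpace ℝ (Fin D) → ℝ) (s : ℝ)
    (x : EuclideanSpace ℝ (Fin D)) :
    EuclideanSpace ℝ (Fin D) →L[ℝ] EuclideanSpace ℝ (Fin D) :=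
  fderiv ℝ (fun z => gradient (fun w => Real.log (p s w)) z) x

open scoped ContDiff in
lemma mt_inner_grad {D : ℕ} (u : EuclideanSpace ℝ (Fin D) → ℝ) (x v : EuclideanSpace ℝ (Fin D)) :
    ⟪gradient u x, v⟫ = fderiv ℝ u x v := by
  simp [gradient]

open scoped ContDiff in
lemma mt_grad_smooth {D : ℕ} {u : EuclideanSpace ℝ (Fin D) → ℝ} (hu : ContDiff ℝ ∞ u) :
    ContDiff ℝ ∞ (gradient u) := by
  have h1 : ContDiff ℝ ∞ (fderiv ℝ u) := hu.fderiv_right (by simp)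
  exact (InnerProductSpace.toDual ℝ (EuclideanSpace ℝ (Fin D))).symm.contDiff.comp h1

open scoped ContDiff in
lemma mt_divg_smooth {D : ℕ} {F : EuclideanSpace ℝ (Fin D) → EuclideanSpace ℝ (Fin D)}
    (hF : ContDiff ℝ ∞ F) : ContDiff ℝ ∞ (divg F) := by
  have h1 : ContDiff ℝ ∞ (fderiv ℝ F) := hF.fderiv_right (by simp)
  unfold divg
  refine ContDiff.sum fun i _ => ?_
  have h2 : ContDiff ℝ ∞ fun x => fderiv ℝ F x (EuclideanSpace.single i 1) :=
    h1.clm_apply contDiff_const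
  exact (EuclideanSpace.proj (𝕜 := ℝ) i).contDiff.comp h2

lemma mt_divg_smul {D : ℕ} {u : EuclideanSpace ℝ (Fin D) → ℝ}
    {F : EuclideanSpace ℝ (Fin D) → EuclideanSpace ℝ (Fin D)} {x : EuclideanSpace ℝ (Fin D)}
    (hu : DifferentiableAt ℝ u x) (hF : DifferentiableAt ℝ F x) :
    divg (fun z => u z • F z) x = u x * divg F x + ⟪gradient u x, F x⟫ := by
  have h := (hu.hasFDerivAt.smul hF.hasFDerivAt).fderiv
  have hs : F x = ∑ i, F x i • EuclideanSpace.single i (1:ℝ) := by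
    ext j; simp [Finset.sum_apply, Pi.single_apply]
  have h2 : ⟪gradient u x, F x⟫ = ∑ i, F x i * fderiv ℝ u x (EuclideanSpace.single i 1) := by
    rw [mt_inner_grad]
    conv_lhs => rw [hs]
    simp [map_sum]
  rw [h2]
  unfold divg
  rw [Finset.mul_sum, ← Finset.sum_add_distrib]
  refine Finset.sum_congr rfl fun i _ => ?_
  change (fderiv ℝ (u • F) x) _ i = _
  rw [h]
  simp [mul_comm]

lemma mt_divg_id {D : ℕ} (c : ℝ) (x : EuclideanSpace ℝ (Fin D)) :
    divg (fun z => c • z) x = c * D := by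
  have : ∀ x : EuclideanSpace ℝ (Fin D), fderiv ℝ (fun z : EuclideanSpace ℝ (Fin D) => c • z) x
      = c • ContinuousLinearMap.id ℝ _ := fun x => ((hasFDerivAt_id x).const_smul c).fderiv
  simp [divg, this, mul_comm]

open scoped ContDiff in
lemma mt_inner_hess {D : ℕ} {u : EuclideanSpace ℝ (Fin D) → ℝ} (hu : ContDiff ℝ ∞ u)
    (x v w : EuclideanSpace ℝ (Fin D)) :
    ⟪fderiv ℝ (gradient u) x v, w⟫ = fderiv ℝ (fderiv ℝ u) x v w := by
  have h1 : DifferentiableAt ℝ (gradient u) x :=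
    (mt_grad_smooth hu).differentiable (by simp) x
  have h0 : ContDiff ℝ ∞ (fderiv ℝ u) := hu.fderiv_right (by simp)
  have h2 : DifferentiableAt ℝ (fderiv ℝ u) x := h0.differentiable (by simp) x
  have e : (fun z => ⟪gradient u z, w⟫) = fun z => fderiv ℝ u z w := by
    ext z; exact mt_inner_grad u z w
  have h3 := fderiv_inner_apply ℝ h1 (differentiableAt_const w) v
  rw [e, fderiv_clm_apply h2 (differentiableAt_const w)] at h3
  simpa using h3.symm

open scoped ContDiff in
lemma mt_hess_symm {D : ℕ} {u : EuclideanSpace ℝ (Fin D) → ℝ} (hu : ContDiff ℝ ∞ u)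
    (x v w : EuclideanSpace ℝ (Fin D)) :
    ⟪w, fderiv ℝ (gradient u) x v⟫ = ⟪fderiv ℝ (gradient u) x w, v⟫ := by
  rw [real_inner_comm, mt_inner_hess hu, mt_inner_hess hu]
  exact (hu.contDiffAt.isSymmSndFDerivAt (by simp only [minSmoothness_of_isRCLikeNormedField]; exact WithTop.coe_le_coe.2 (le_top (a := (2 : ℕ∞))))) v w

open scoped ContDiff in
lemma mt_G_eq {D : ℕ} {L : ℝ × EuclideanSpace ℝ (Fin D) → ℝ} (hL : ContDiff ℝ ∞ L)
    (s : ℝ) (x v : EuclideanSpace ℝ (Fin D)) :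
    fderiv ℝ (fun z => L (s, z)) x v = fderiv ℝ L (s, x) (0, v) := by
  have h1 : HasFDerivAt L (fderiv ℝ L (s, x)) (s, x) :=
    (hL.differentiable (by simp) _).hasFDerivAt
  have := h1.comp x (hasFDerivAt_prodMk_right s x)
  have h2 := this.fderiv
  change fderiv ℝ (fun z => L (s, z)) x = _ at h2
  rw [h2]; simp

open scoped ContDiff in
lemma mt_G_smooth {D : ℕ} {L : ℝ × EuclideanSpace ℝ (Fin D) → ℝ} (hL : ContDiff ℝ ∞ L) :
    ContDiff ℝ ∞ (fun q : ℝ × EuclideanSpace ℝ (Fin D) => gradient (fun z => L (q.1, z)) q.2) := by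
  have h0 : ContDiff ℝ ∞ (fderiv ℝ L) := hL.fderiv_right (by simp)
  have h1 : ContDiff ℝ ∞ (fun q => (fderiv ℝ L q).comp
      (ContinuousLinearMap.inr ℝ ℝ (EuclideanSpace ℝ (Fin D)))) := h0.clm_comp contDiff_const
  have h2 := (InnerProductSpace.toDual ℝ (EuclideanSpace ℝ (Fin D))).symm.contDiff.comp h1
  convert h2 using 1
  ext1 q
  simp only [gradient, Function.comp]
  congr 1
  ext v
  rw [mt_G_eq hL]; simp

open scoped ContDiff in
lemma mt_mixed {D : ℕ} {L : ℝ × EuclideanSpace ℝ (Fin D) → ℝ} (hL : ContDiff ℝ ∞ L)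
    (s : ℝ) (x v : EuclideanSpace ℝ (Fin D)) :
    ⟪fderiv ℝ (fun q : ℝ × EuclideanSpace ℝ (Fin D) => gradient (fun z => L (q.1, z)) q.2)
      (s, x) (1, 0), v⟫ = fderiv ℝ (fun z => deriv (fun τ => L (τ, z)) s) x v := by
  have h0 : ContDiff ℝ ∞ (fderiv ℝ L) := hL.fderiv_right (by simp)
  have hd : DifferentiableAt ℝ (fderiv ℝ L) (s, x) := h0.differentiable (by simp) _
  have hG := (mt_G_smooth hL).differentiable (by simp) (s, x)
  have e : (fun q : ℝ × EuclideanSpace ℝ (Fin D) => ⟪gradient (fun z => L (q.1, z)) q.2, v⟫)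
      = fun q => fderiv ℝ L q (0, v) := by
    ext q; rw [mt_inner_grad, mt_G_eq hL]
  have h3 := fderiv_inner_apply ℝ hG (differentiableAt_const v) (1, 0)
  rw [e, fderiv_clm_apply hd (differentiableAt_const _)] at h3
  have e2 : (fun z => deriv (fun τ => L (τ, z)) s) = fun z => fderiv ℝ L (s, z) (1, 0) := by
    ext z
    have h1 : HasFDerivAt L (fderiv ℝ L (s, z)) (s, z) :=
      (hL.differentiable (by simp) _).hasFDerivAt
    have h4 := (h1.comp s (hasFDerivAt_prodMk_left s z)).hasDerivAt.deriv
    change deriv (fun τ => L (τ, z)) s = _ at h4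
    rw [h4]; simp
  have h5 := (hd.hasFDerivAt.comp x (hasFDerivAt_prodMk_right s x))
  have h6 := (h5.clm_apply (hasFDerivAt_const ((1:ℝ), (0 : EuclideanSpace ℝ (Fin D))) x)).fderiv
  rw [e2]
  change fderiv ℝ (fun z => fderiv ℝ L (s, z) (1, 0)) x = _ at h6
  rw [h6]
  have hs := (hL.contDiffAt (x := (s, x))).isSymmSndFDerivAt (by simp only [minSmoothness_of_isRCLikeNormedField]; exact WithTop.coe_le_coe.2 (le_top (a := (2 : ℕ∞))))
  have := hs (1, 0) (0, v)
  simp at h3 ⊢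
  rw [← h3]; exact this

open scoped ContDiff in
/-- time derivative of the score -/
lemma mt_score {D : ℕ} (p : ℝ → EuclideanSpace ℝ (Fin D) → ℝ) (f gsq : ℝ → ℝ)
    (hp : ContDiff ℝ ∞ (fun q : ℝ × EuclideanSpace ℝ (Fin D) => p q.1 q.2))
    (hppos : ∀ t x, 0 < p t x)
    (hFP : ∀ t x, deriv (fun τ => p τ x) t
      = - divg (fun y => p t y • (f t • y)) x + (1 / 2) * gsq t * lap (p t) x)
    (s : ℝ) (x : EuclideanSpace ℝ (Fin D)) :
    fderiv ℝ (fun q : ℝ × EuclideanSpace ℝ (Fin D) =>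
        gradient (fun z => Real.log (p q.1 z)) q.2) (s, x) (1, 0)
      = - f s • gradient (fun z => Real.log (p s z)) x - f s • hessLog p s x x
        + (1 / 2 * gsq s) • gradient (fun z => lap (fun w => Real.log (p s w)) z) x
        + gsq s • hessLog p s x (gradient (fun z => Real.log (p s z)) x) := by
  have hL : ContDiff ℝ ∞ (fun q : ℝ × EuclideanSpace ℝ (Fin D) => Real.log (p q.1 q.2)) :=
    hp.log fun q => (hppos _ _).ne'
  have hps : ContDiff ℝ ∞ (p s) := hp.comp (contDiff_prodMk_right s)
  have hl : ContDiff ℝ ∞ (fun z => Real.log (p s z)) := hps.log fun z => (hppos _ _).ne'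
  have hG := mt_grad_smooth hl
  have hlap : ContDiff ℝ ∞ (lap fun z => Real.log (p s z)) := mt_divg_smooth hG
  have hgp : ∀ z, gradient (p s) z = p s z • gradient (fun z => Real.log (p s z)) z := by
    intro z
    refine ext_inner_right ℝ fun v => ?_
    have hpd : DifferentiableAt ℝ (p s) z := hps.differentiable (by simp) z
    rw [inner_smul_left, mt_inner_grad, mt_inner_grad, fderiv.log hpd (hppos _ _).ne']
    have := (hppos s z).ne'
    simp; field_simp
  have hdt : ∀ z, deriv (fun τ => Real.log (p τ z)) s
      = - (f s * D) - f s * ⟪z, gradient (fun z => Real.log (p s z)) z⟫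
        + 1 / 2 * gsq s * (lap (fun z => Real.log (p s z)) z
          + ⟪gradient (fun z => Real.log (p s z)) z, gradient (fun z => Real.log (p s z)) z⟫) := by
    intro z
    have hpt : DifferentiableAt ℝ (fun τ => p τ z) s :=
      (hp.comp (contDiff_prodMk_left z)).differentiable (by simp) s
    have hpd : DifferentiableAt ℝ (p s) z := hps.differentiable (by simp) z
    have hne := (hppos s z).ne'
    rw [deriv.log hpt hne, hFP, mt_divg_smul hpd (by fun_prop), mt_divg_id]
    have : lap (p s) z = divg (fun z => p s z • gradient (fun z => Real.log (p s z)) z) z := by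
      unfold lap; congr 1; ext1 z; exact hgp z
    rw [this, mt_divg_smul hpd (hG.differentiable (by simp) z), hgp, inner_smul_left,
      inner_smul_left, inner_smul_right, real_inner_comm z]
    simp only [lap, RCLike.conj_to_real]
    field_simp
    ring
  refine ext_inner_right ℝ fun v => ?_
  have hm := mt_mixed hL s x v
  simp only at hm
  rw [hm]
  simp only [hdt]
  have hGd := (hG.differentiable (by simp) x).hasFDerivAt
  have hLd := (hlap.differentiable (by simp) x).hasFDerivAt
  have hfd := ((((hasFDerivAt_id x).inner ℝ hGd).const_mul (f s)).const_sub (-(f s * D))).add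
    ((hLd.add (hGd.inner ℝ hGd)).const_mul (1 / 2 * gsq s))
  have hfd' := hfd.fderiv
  have e1 := mt_hess_symm hl x v x
  have e2 := mt_hess_symm hl x v (gradient (fun z => Real.log (p s z)) x)
  have e3 := mt_inner_grad (lap fun z => Real.log (p s z)) x v
  have hgoal := congrArg (fun T => T v) hfd'
  refine Eq.trans hgoal ?_
  have hH : hessLog p s x = fderiv ℝ (gradient fun z => Real.log (p s z)) x := rfl
  simp only [inner_add_left, inner_sub_left, inner_smul_left, hH, RCLike.conj_to_real, ← e1, ← e2]
  simp only [← e3, ContinuousLinearMap.add_apply, ContinuousLinearMap.neg_apply,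
    ContinuousLinearMap.smul_apply, ContinuousLinearMap.comp_apply, ContinuousLinearMap.prod_apply,
    fderivInnerCLM_apply, ContinuousLinearMap.id_apply, smul_eq_mul, id]
  rw [real_inner_comm (gradient (fun z => Real.log (p s z)) x) v, real_inner_comm (gradient _ x) (fderiv ℝ _ x v)]
  ring

/-- The mode-tracking ODE (Theorem 4). -/
theorem mode_tracking_ode {D : ℕ} (hD : 0 < D)
    (α σ : ℝ → ℝ) (hα : ContDiff ℝ (⊤ : ℕ∞) α) (hσ : ContDiff ℝ (⊤ : ℕ∞) σ)
    (hαpos : ∀ t, 0 < α t) (hσpos : ∀ t, 0 < σ t)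
    (lam f gsq : ℝ → ℝ)
    (hlam : ∀ t, lam t = Real.log (α t ^ 2 / σ t ^ 2))
    (hf : ∀ t, f t = deriv (fun u => Real.log (α u)) t)
    (hgsq : ∀ t, gsq t = -(deriv lam t) * σ t ^ 2)
    (p : ℝ → EuclideanSpace ℝ (Fin D) → ℝ)
    (hp : ContDiff ℝ (⊤ : ℕ∞) (fun q : ℝ × EuclideanSpace ℝ (Fin D) => p q.1 q.2))
    (hppos : ∀ t x, 0 < p t x)
    (hFP : ∀ t x, deriv (fun τ => p τ x) t
      = - divg (fun y => p t y • (f t • y)) x + (1 / 2) * gsq t * lap (p t) x)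
    (t : ℝ) (ht : 0 < t) (xt : EuclideanSpace ℝ (Fin D))
    (ft gt2 ψ : ℝ → ℝ)
    (hft : ∀ s, ft s = α t / α s)
    (hgt2 : ∀ s, gt2 s = σ t ^ 2 - ft s ^ 2 * σ s ^ 2)
    (hψ : ∀ s, ψ s = ft s ^ 2 / gt2 s)
    (hgt2pos : ∀ s ∈ Set.Ioo (0 : ℝ) t, 0 < gt2 s)
    (y y' : ℝ → EuclideanSpace ℝ (Fin D))
    (hy : ∀ s ∈ Set.Ioo (0 : ℝ) t, HasDerivAt y (y' s) s)
    (hcrit : ∀ s ∈ Set.Ioo (0 : ℝ) t,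
      gradient (fun z => Real.log (p s z)) (y s)
        + (ft s / gt2 s) • (xt - ft s • y s) = 0)
    (hA : ∀ s ∈ Set.Ioo (0 : ℝ) t,
      IsUnit (hessLog p s (y s)
        - ψ s • ContinuousLinearMap.id ℝ (EuclideanSpace ℝ (Fin D)))) :
    ∀ s ∈ Set.Ioo (0 : ℝ) t,
      (y' s = f s • y s - gsq s • gradient (fun z => Real.log (p s z)) (y s)
        - ((1 / 2) * gsq s) •
            (Ring.inverse (hessLog p s (y s)
              - ψ s • ContinuousLinearMap.id ℝ (EuclideanSpace ℝ (Fin D))))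
            (gradient (fun z => lap (fun w => Real.log (p s w)) z) (y s)))
      ∧ ψ s = (1 / σ s ^ 2) * (Real.exp (lam t) / (Real.exp (lam s) - Real.exp (lam t))) := by
  intro s hs
  have hg := hgt2pos s hs
  have hαs := (hαpos s).ne'
  have hσs := (hσpos s).ne'
  have hαt := hαpos t
  have hα' : HasDerivAt α (deriv α s) s := (hα.differentiable (by simp) s).hasDerivAt
  have hσ' : HasDerivAt σ (deriv σ s) s := (hσ.differentiable (by simp) s).hasDerivAt
  have hfs : f s = deriv α s / α s := by
    rw [hf]; exact (hα'.log hαs).deriv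
  have hgs : gsq s = 2 * σ s * deriv σ s - 2 * f s * σ s ^ 2 := by
    have hl : lam = fun t => 2 * Real.log (α t) - 2 * Real.log (σ t) := by
      ext u
      rw [hlam, Real.log_div (pow_ne_zero _ (hαpos u).ne') (pow_ne_zero _ (hσpos u).ne'),
        Real.log_pow, Real.log_pow]
      norm_num
    have h1 := (((hα'.log hαs).const_mul 2).sub ((hσ'.log hσs).const_mul 2)).deriv
    have h2 : deriv lam s = 2 * (deriv α s / α s) - 2 * (deriv σ s / σ s) := by
      rw [hl]; exact h1
    rw [hgsq, h2, hfs]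
    field_simp
    ring
  have hftpos : 0 < ft s := by rw [hft]; exact div_pos hαt (hαpos s)
  have hft' : HasDerivAt ft (-(f s) * ft s) s := by
    have h1 := (hasDerivAt_const s (α t)).div hα' hαs
    have h2 : ft = fun u => α t / α u := funext hft
    rw [h2]
    refine h1.congr_deriv ?_
    rw [hfs]
    field_simp
    ring
  have hgt' : HasDerivAt gt2 (-(ft s ^ 2 * gsq s)) s := by
    have h1 := ((hft'.pow 2).mul (hσ'.pow 2)).const_sub (σ t ^ 2)
    have h2 : gt2 = fun u => σ t ^ 2 - ft u ^ 2 * σ u ^ 2 := funext hgt2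
    rw [h2]
    refine h1.congr_deriv ?_
    rw [hgs]
    simp
    ring
  have hc' : HasDerivAt (fun u => ft u / gt2 u) ((ft s / gt2 s) * (-(f s) + ψ s * gsq s)) s := by
    refine (hft'.div hgt' hg.ne').congr_deriv ?_
    rw [hψ]
    field_simp
    ring
  constructor
  · have hL : ContDiff ℝ (⊤ : ℕ∞)
        (fun q : ℝ × EuclideanSpace ℝ (Fin D) => Real.log (p q.1 q.2)) :=
      hp.log fun q => (hppos _ _).ne'
    have hGs := mt_G_smooth hL
    have hscore := mt_score p f gsq hp hppos hFP s (y s)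
    set G : ℝ × EuclideanSpace ℝ (Fin D) → EuclideanSpace ℝ (Fin D) :=
      fun q => gradient (fun z => Real.log (p q.1 z)) q.2 with hGdef
    have hGd : HasFDerivAt G (fderiv ℝ G (s, y s)) (s, y s) :=
      (hGs.differentiable (by simp) _).hasFDerivAt
    have hys := hy s hs
    have hcomp : HasDerivAt (fun u => G (u, y u)) (fderiv ℝ G (s, y s) (1, y' s)) s :=
      HasFDerivAt.comp_hasDerivAt (f := fun u => (u, y u)) s hGd ((hasDerivAt_id s).prodMk hys)
    have hH : fderiv ℝ G (s, y s) (0, y' s) = hessLog p s (y s) (y' s) := by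
      have h1 := (hGd.comp (y s) (hasFDerivAt_prodMk_right s (y s))).fderiv
      change hessLog p s (y s) = _ at h1
      rw [h1]; simp
    have hsplit : fderiv ℝ G (s, y s) (1, y' s)
        = fderiv ℝ G (s, y s) (1, 0) + hessLog p s (y s) (y' s) := by
      rw [← hH, ← map_add]; simp
    have hrest := hc'.smul ((hasDerivAt_const s xt).sub (hft'.smul hys))
    have htot := hcomp.add hrest
    have hz : (fun u => G (u, y u)) + (fun u => ft u / gt2 u) • ((fun _ => xt) - ft • y)
        =ᶠ[nhds s] fun _ => 0 := by
      filter_upwards [isOpen_Ioo.mem_nhds hs] with u hu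
      exact hcrit u hu
    have hzero := (hasDerivAt_const s (0 : EuclideanSpace ℝ (Fin D))).congr_of_eventuallyEq hz
    have hE := htot.unique hzero
    rw [hsplit, hscore] at hE
    have hcr := hcrit s hs
    set g := gradient (fun z => Real.log (p s z)) (y s) with hgdef
    set H := hessLog p s (y s) with hHdef
    set dl := gradient (fun z => lap (fun w => Real.log (p s w)) z) (y s) with hdl
    have hψc : ψ s = ft s / gt2 s * ft s := by rw [hψ]; ring
    set A := H - ψ s • ContinuousLinearMap.id ℝ (EuclideanSpace ℝ (Fin D)) with hAdef
    have hAu : IsUnit A := hA s hs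
    have hAinv : ∀ v, Ring.inverse A (A v) = v := by
      intro v
      have := Ring.inverse_mul_cancel A hAu
      exact congrArg (fun T => T v) this
    have hAv : ∀ v, A v = H v - ψ s • v := fun v => by simp [hAdef]
    have key : A (y' s - f s • y s + gsq s • g) = -((1 / 2 * gsq s) • dl) := by
      have hw : (ft s / gt2 s) • (xt - ft s • y s) = -g := by
        rw [add_comm] at hcr; exact eq_neg_of_add_eq_zero_left hcr
      have hw2 : (ft s / gt2 s * (-f s + ψ s * gsq s)) • (xt - ft s • y s)
          = -((-f s + ψ s * gsq s) • g) := by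
        rw [mul_comm, mul_smul, hw, smul_neg]
      simp only [Pi.sub_apply, Pi.smul_apply', hw2] at hE
      rw [hAv]
      simp only [map_add, map_sub, map_smul]
      rw [← sub_eq_zero, ← hE, hψc]
      module
    have h2 := hAinv (y' s - f s • y s + gsq s • g)
    rw [key, map_neg, map_smul] at h2
    rw [sub_eq_add_neg _ ((1 / 2 * gsq s) • _), h2]
    abel
  · have hx : ∀ u, Real.exp (lam u) = α u ^ 2 / σ u ^ 2 := fun u => by
      rw [hlam, Real.exp_log (div_pos (pow_pos (hαpos u) 2) (pow_pos (hσpos u) 2))]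
    rw [hx, hx, hψ]
    have h1 := hg
    rw [hgt2, hft] at h1
    rw [hgt2, hft]
    have hσt := (hσpos t).ne'
    have hne : α s ^ 2 / σ s ^ 2 - α t ^ 2 / σ t ^ 2 ≠ 0 := by
      have : α s ^ 2 / σ s ^ 2 - α t ^ 2 / σ t ^ 2
        = (σ t ^ 2 - (α t / α s) ^ 2 * σ s ^ 2) * (α s ^ 2 / (σ s ^ 2 * σ t ^ 2)) := by
        field_simp
      rw [this]
      exact mul_ne_zero h1.ne' (by positivity)
    have h1' := h1.ne'
    rw [← mul_div_assoc, div_eq_div_iff h1' hne]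
    field_simp
end
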